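/- Fix a nonzero real number λ. Every nonempty distinguished set g K_{i,j} determines the pair (i,j) uniquely; assign to it the value λ q^{−4i} X^{4j} ∈ ℝ((X)), and assign the value 0 to the empty set. For a ddd-presentation P define μ₀(P) ∈ ℝ((X)) to be the sum of the values of its big shells minus the sum of the values of its small shells (counted over all dd-presentations composing P). Then whenever P' is a refinement of a ddd-presentation P, one has μ₀(P') = μ₀(P). -/

import Mathlib

/-!
The value `mu0` of a ddd-presentation depends only on the set it represents, so it is in particular
unchanged by refinement.

A presentation gives an integral combination of distinguished sets, big shells counted with sign
`+1` and small shells with sign `-1`, whose indicator function is that of the represented set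
(`evalHom_indicator_cycle`). Two presentations of the same set therefore differ by a relation
between indicator functions, and `zero_of_indicator_sum_zero` shows that such a relation persists
between values, given two facts: distinguished sets are laminar (two of them are disjoint or
nested, since the `K_{i,j}` form a chain of subgroups), and the values are additive whenever a
coset is partitioned into finitely many smaller cosets (`LevelFiltration.wt_partition`).

Additivity is a statement about indices. Reduction of `(g - 1) / τ`, with `τ = t₁^i t₂^j`, modulo
the maximal ideal shows `[K_{i,j} : K_{i+1,j}] = q^4` (`relIndex_congruenceSubgroup`), and hence
`[K_{i,j} : K_{i',j'}]` is infinite when `j < j'`. In a partition of a group into finitely many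
cosets every subgroup has finite index and the reciprocals of the indices sum to `1`
(`finiteIndex_and_sum_inv_index`, which rests on B. H. Neumann's covering lemma). So a partition of
a coset of level `(i,j)` involves only levels `(i',j)`, where the index `q^{4(i'-i)}` is exactly
the ratio of the values. The same indices show that the groups `K_{i,j}` are pairwise distinct, so
that a coset determines its level.
-/

open Matrix

noncomputable section

/-- The lexicographic-from-the-right (non-strict) order on `ℤ × ℤ`:
`(i,j) ≤ (m,n)` iff `j < n`, or `j = n` and `i ≤ m`. -/
def RLex (a b : ℤ × ℤ) : Prop := a.2 < b.2 ∨ (a.2 = b.2 ∧ a.1 ≤ b.1)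

/-- The lexicographic-from-the-right strict order on `ℤ × ℤ`:
`(i,j) < (m,n)` iff `j < n`, or `j = n` and `i < m`. -/
def RLt (a b : ℤ × ℤ) : Prop := a.2 < b.2 ∨ (a.2 = b.2 ∧ a.1 < b.1)

/-- The left translate `g • A` of a subset `A` of a group. -/
def lmul {G : Type*} [Group G] (g : G) (A : Set G) : Set G := (fun x => g * x) '' A

/-- The set `K_{i,j} = I₂ + t₁^i t₂^j M₂(O_F)` inside `GL₂(F)` (a subgroup when
`(i,j) > (0,0)`). -/
def Kmat {F : Type*} [Field F] (O : Subring F) (t1 t2 : F) (i j : ℤ) :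
    Set (GL (Fin 2) F) :=
  {g | ∀ a b : Fin 2, ∃ c ∈ O,
    (g : Matrix (Fin 2) (Fin 2) F) a b
      = (1 : Matrix (Fin 2) (Fin 2) F) a b + t1 ^ i * t2 ^ j * c}

/-- Distinguished subsets of `GL₂(F)`: the empty set and the left cosets `g K_{i,j}`
with `(i,j) > (0,0)`. -/
def Dist2 {F : Type*} [Field F] (O : Subring F) (t1 t2 : F)
    (D : Set (GL (Fin 2) F)) : Prop :=
  D = ∅ ∨ ∃ (g : GL (Fin 2) F) (i j : ℤ), RLt (0, 0) (i, j) ∧ D = lmul g (Kmat O t1 t2 i j)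

/-- The ring `ℛ` of subsets of `GL₂(F)`: the smallest collection containing all
distinguished sets and closed under binary unions, intersections and differences. -/
inductive RMem {F : Type*} [Field F] (O : Subring F) (t1 t2 : F) :
    Set (GL (Fin 2) F) → Prop
  | dist (D : Set (GL (Fin 2) F)) : Dist2 O t1 t2 D → RMem O t1 t2 D
  | union (A B : Set (GL (Fin 2) F)) : RMem O t1 t2 A → RMem O t1 t2 B → RMem O t1 t2 (A ∪ B)
  | inter (A B : Set (GL (Fin 2) F)) : RMem O t1 t2 A → RMem O t1 t2 B → RMem O t1 t2 (A ∩ B)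
  | diff (A B : Set (GL (Fin 2) F)) : RMem O t1 t2 A → RMem O t1 t2 B → RMem O t1 t2 (A \ B)

/-- The set `K = GL₂(O_F)`: matrices whose entries, together with the entries of the
inverse matrix, lie in the rank-two ring of integers `O_F`. -/
def GLO {F : Type*} [Field F] (O : Subring F) : Set (GL (Fin 2) F) :=
  {g | (∀ a b : Fin 2, (g : Matrix (Fin 2) (Fin 2) F) a b ∈ O) ∧
    ∀ a b : Fin 2, ((g⁻¹ : GL (Fin 2) F) : Matrix (Fin 2) (Fin 2) F) a b ∈ O}

/-- A dd-presentation: a pair `(𝒜, ℬ)` of finite sets of pairwise disjoint distinguished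
sets (distinguishedness given by the predicate `Dist`) with `⋃ℬ ⊆ ⋃𝒜`. -/
structure DDPres (α : Type*) (Dist : Set α → Prop) where
  A : Finset (Set α)
  B : Finset (Set α)
  distA : ∀ D ∈ A, Dist D
  distB : ∀ D ∈ B, Dist D
  disjA : ∀ D ∈ A, ∀ D' ∈ A, D ≠ D' → Disjoint D D'
  disjB : ∀ D ∈ B, ∀ D' ∈ B, D ≠ D' → Disjoint D D'
  subset : ⋃₀ (B : Set (Set α)) ⊆ ⋃₀ (A : Set (Set α))

/-- The set represented by a dd-presentation: `⋃𝒜 \ ⋃ℬ`. -/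
def DDPres.repr {α : Type*} {Dist : Set α → Prop} (P : DDPres α Dist) : Set α :=
  ⋃₀ (P.A : Set (Set α)) \ ⋃₀ (P.B : Set (Set α))

/-- A ddd-presentation: a finite family of dd-presentations whose represented sets are
pairwise disjoint. -/
structure DDDPres (α : Type*) (Dist : Set α → Prop) where
  parts : List (DDPres α Dist)
  disj : parts.Pairwise fun P Q => Disjoint P.repr Q.repr

/-- The set represented by a ddd-presentation. -/
def DDDPres.repr {α : Type*} {Dist : Set α → Prop} (P : DDDPres α Dist) : Set α :=
  ⋃ Q ∈ P.parts, Q.repr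

/-- `D` is a big shell of the ddd-presentation `P`. -/
def DDDPres.IsBigShell {α : Type*} {Dist : Set α → Prop} (P : DDDPres α Dist)
    (D : Set α) : Prop :=
  ∃ Q ∈ P.parts, D ∈ Q.A

/-- `D` is a small shell of the ddd-presentation `P`. -/
def DDDPres.IsSmallShell {α : Type*} {Dist : Set α → Prop} (P : DDDPres α Dist)
    (D : Set α) : Prop :=
  ∃ Q ∈ P.parts, D ∈ Q.B

/-- A ddd-presentation is reduced if none of its dd-presentations has the form
`({B}, {B})` for a distinguished set `B`. -/
def DDDPres.Reduced {α : Type*} {Dist : Set α → Prop} (P : DDDPres α Dist) : Prop :=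
  ∀ Q ∈ P.parts, ¬ ∃ D : Set α, Q.A = {D} ∧ Q.B = {D}

/-- `P'` is a refinement of `P`: they represent the same set, every big shell of `P` is a
big shell of `P'`, and every small shell of `P` is a small shell of `P'`. -/
def DDDPres.Refines {α : Type*} {Dist : Set α → Prop} (P' P : DDDPres α Dist) : Prop :=
  P'.repr = P.repr ∧
  (∀ D : Set α, P.IsBigShell D → P'.IsBigShell D) ∧
  (∀ D : Set α, P.IsSmallShell D → P'.IsSmallShell D)

/-- The value of a ddd-presentation: the sum of the values of its big shells minus the
sum of the values of its small shells, where distinguished sets are valued via `val`. -/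
noncomputable def mu0 {α : Type*} {Dist : Set α → Prop}
    (val : Set α → LaurentSeries ℝ) (P : DDDPres α Dist) : LaurentSeries ℝ :=
  (P.parts.map fun Q => (∑ D ∈ Q.A, val D) - ∑ D ∈ Q.B, val D).sum


/-! ### Relations between indicator functions of a laminar family -/

theorem sum_indicator_eq_indicator_sUnion {α : Type*} (T : Finset (Set α))
    (hT : ∀ E ∈ T, ∀ E' ∈ T, E ≠ E' → Disjoint E E') (x : α) :
    ∑ E ∈ T, E.indicator (fun _ => (1 : ℤ)) x
      = (⋃₀ (T : Set (Set α))).indicator (fun _ => (1 : ℤ)) x := by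
  by_cases hx : x ∈ ⋃₀ (T : Set (Set α))
  · rw [Set.indicator_of_mem hx]
    obtain ⟨E, hE, hxE⟩ := hx
    rw [Finset.sum_eq_single_of_mem E (Finset.mem_coe.1 hE), Set.indicator_of_mem hxE]
    intro E' hE' hne'
    exact Set.indicator_of_notMem (fun h =>
      Set.disjoint_left.1 (hT E' hE' E (Finset.mem_coe.1 hE) hne') h hxE) _
  · rw [Set.indicator_of_notMem hx, Finset.sum_eq_zero]
    intro E hE
    exact Set.indicator_of_notMem (fun h => hx ⟨E, hE, h⟩) _

/-- Let `Dist` be a laminar family of sets and `val` a function on it that is additive on finite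
partitions of a member into members. Then every integral linear relation between indicator
functions of nonempty members also holds between their values. The induction is on the number `n`
of sets in the relation: an inclusion-maximal one is either partitioned by smaller ones, and can be
eliminated, or has a point that lies in no other one, and then has coefficient `0`. -/
theorem zero_of_indicator_sum_zero {α M : Type*} [AddCommGroup M] (Dist : Set α → Prop)
    (val : Set α → M)
    (hlam : ∀ D E, Dist D → Dist E → Disjoint D E ∨ D ⊆ E ∨ E ⊆ D)
    (hadd : ∀ D, Dist D → D.Nonempty → ∀ T : Finset (Set α), (∀ E ∈ T, Dist E ∧ E.Nonempty) →
      (∀ E ∈ T, ∀ E' ∈ T, E ≠ E' → Disjoint E E') → D = ⋃₀ (T : Set (Set α)) →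
      val D = ∑ E ∈ T, val E) :
    ∀ (n : ℕ) (S : Finset (Set α)) (c : Set α → ℤ), S.card = n →
      (∀ D ∈ S, Dist D ∧ D.Nonempty) →
      (∀ x, ∑ D ∈ S, c D * D.indicator (fun _ => (1 : ℤ)) x = 0) →
      ∑ D ∈ S, c D • val D = 0 := by
  classical
  intro n
  induction n with
  | zero =>
    intro S c hS _ _
    rw [Finset.card_eq_zero] at hS
    simp [hS]
  | succ n ih =>
    intro S c hS hD hsum
    have hne : S.Nonempty := by
      rw [← Finset.card_pos]; omega
    obtain ⟨D, hDS, hDmax⟩ := S.exists_maximal hne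
    have hmax : ∀ E ∈ S, D ⊆ E → E = D := fun E hE hDE =>
      Set.Subset.antisymm (hDmax hE hDE) hDE
    have hcard : (S.erase D).card = n := by rw [Finset.card_erase_of_mem hDS]; omega
    have hD' : ∀ E ∈ S.erase D, Dist E ∧ E.Nonempty := fun E hE =>
      hD E (Finset.mem_of_mem_erase hE)
    let U := S.filter (fun E => E ⊂ D)
    by_cases hcov : D ⊆ ⋃₀ (U : Set (Set α))
    · -- The maximal elements of `U` partition `D`; substitute this partition for `D`.
      let T := U.filter (fun E => ∀ E' ∈ U, E ⊆ E' → E' = E)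
      have hTU : ∀ E ∈ T, E ∈ U := fun E hE => (Finset.mem_filter.1 hE).1
      have hTS : T ⊆ S.erase D := by
        intro E hE
        have h := Finset.mem_filter.1 (hTU E hE)
        exact Finset.mem_erase.2 ⟨h.2.ne, h.1⟩
      have hTdisj : ∀ E ∈ T, ∀ E' ∈ T, E ≠ E' → Disjoint E E' := by
        intro E hE E' hE' hEE'
        rcases hlam E E' (hD' E (hTS hE)).1 (hD' E' (hTS hE')).1 with h | h | h
        · exact h
        · exact absurd ((Finset.mem_filter.1 hE).2 E' (hTU E' hE') h).symm hEE'
        · exact absurd ((Finset.mem_filter.1 hE').2 E (hTU E hE) h) hEE'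
      have hDT : D = ⋃₀ (T : Set (Set α)) := by
        apply Set.Subset.antisymm
        · intro x hx
          obtain ⟨E, hE, hxE⟩ := hcov hx
          obtain ⟨E', hEE', hE'⟩ := U.exists_le_maximal (Finset.mem_coe.1 hE)
          exact ⟨E', Finset.mem_coe.2 (Finset.mem_filter.2 ⟨hE'.1, fun E'' h1 h2 =>
            Set.Subset.antisymm (hE'.2 h1 h2) h2⟩), hEE' hxE⟩
        · rintro x ⟨E, hE, hxE⟩
          exact (Finset.mem_filter.1 (hTU E (Finset.mem_coe.1 hE))).2.1 hxE
      have hval := hadd D (hD D hDS).1 (hD D hDS).2 T (fun E hE => hD' E (hTS hE)) hTdisj hDT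
      have hind : ∀ x, D.indicator (fun _ => (1 : ℤ)) x
          = ∑ E ∈ T, E.indicator (fun _ => (1 : ℤ)) x := by
        intro x
        rw [sum_indicator_eq_indicator_sUnion T hTdisj, ← hDT]
      have key := ih (S.erase D) (fun E => c E + if E ∈ T then c D else 0) hcard hD' (by
        intro x
        have h0 := hsum x
        rw [← Finset.add_sum_erase S _ hDS, hind x] at h0
        refine Eq.trans ?_ h0
        simp only [add_mul, Finset.sum_add_distrib, ite_mul, zero_mul]
        rw [Finset.sum_ite_mem, Finset.inter_eq_right.2 hTS, Finset.mul_sum, add_comm])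
      rw [← Finset.add_sum_erase S _ hDS, hval, ← key]
      simp only [add_smul, Finset.sum_add_distrib, ite_smul, zero_smul]
      rw [Finset.sum_ite_mem, Finset.inter_eq_right.2 hTS, Finset.smul_sum, add_comm]
    · -- By laminarity and maximality of `D`, a point of `D` outside `⋃₀ U` is in no other set of `S`.
      obtain ⟨x, hxD, hx⟩ := Set.not_subset.1 hcov
      have hother : ∀ E ∈ S, E ≠ D → x ∉ E := by
        intro E hE hED hxE
        rcases hlam E D (hD E hE).1 (hD D hDS).1 with h | h | h
        · exact Set.disjoint_left.1 h hxE hxD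
        · exact hx ⟨E, Finset.mem_coe.2 (Finset.mem_filter.2 ⟨hE, h.ssubset_of_ne hED⟩), hxE⟩
        · exact hED (hmax E hE h)
      have hcD : c D = 0 := by
        have := hsum x
        rwa [Finset.sum_eq_single_of_mem D hDS, Set.indicator_of_mem hxD, mul_one] at this
        intro E hE hED
        rw [Set.indicator_of_notMem (hother E hE hED), mul_zero]
      rw [← Finset.add_sum_erase S _ hDS, hcD, zero_smul, zero_add]
      refine ih _ c hcard hD' fun x => ?_
      have := hsum x
      rwa [← Finset.add_sum_erase S _ hDS, hcD, zero_mul, zero_add] at this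

/-! ### Partitions of a group into cosets -/

open scoped Pointwise in
theorem sum_inv_index_of_finite {G ι : Type*} [Group G] [Finite G] (s : Finset ι) (H : ι → Subgroup G)
    (g : ι → G) (hcov : ⋃ i ∈ s, g i • (H i : Set G) = Set.univ)
    (hd : (s : Set ι).PairwiseDisjoint (fun i => g i • (H i : Set G))) :
    ∑ i ∈ s, ((H i).index : ℚ)⁻¹ = 1 := by
  classical
  have := Fintype.ofFinite G
  have h1 : ∑ i ∈ s, Nat.card (H i) = Nat.card G := by
    have : (Finset.univ : Finset G) = s.biUnion fun i => (g i • (H i : Set G)).toFinset := by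
      ext x
      have hx : x ∈ ⋃ i ∈ s, g i • (H i : Set G) := hcov ▸ Set.mem_univ x
      simp only [Set.mem_iUnion, exists_prop] at hx
      simpa only [Finset.mem_univ, Finset.mem_biUnion, Set.mem_toFinset, true_iff] using hx
    rw [Nat.card_eq_fintype_card (α := G), ← Finset.card_univ, this, Finset.card_biUnion]
    · refine Finset.sum_congr rfl fun i _ => ?_
      rw [← Set.ncard_eq_toFinset_card', Set.ncard_smul_set]
      rfl
    · intro i hi j hj hij
      exact Set.disjoint_toFinset.2 (hd hi hj hij)
  have hG : (Nat.card G : ℚ) ≠ 0 := Nat.cast_ne_zero.2 Nat.card_pos.ne'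
  have h2 : ∀ i, ((H i).index : ℚ)⁻¹ = Nat.card (H i) / Nat.card G := by
    intro i
    have h3 : ((H i).index : ℚ) ≠ 0 := Nat.cast_ne_zero.2 Subgroup.FiniteIndex.index_ne_zero
    rw [← (H i).card_mul_index] at hG ⊢
    push_cast at hG ⊢
    field_simp
  simp_rw [h2]
  rw [← Finset.sum_div, ← Nat.cast_sum, h1, div_self hG]

open scoped Pointwise in
/-- If a group is partitioned into finitely many left cosets, all the subgroups have finite index
and the reciprocals of the indices sum to `1`. By B. H. Neumann's lemma the cosets of subgroups of
infinite index are superfluous, which disjointness only permits if there are none; the count then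
takes place in the finite quotient by the normal core of the intersection. -/
theorem finiteIndex_and_sum_inv_index {G ι : Type*} [Group G] (s : Finset ι)
    (H : ι → Subgroup G)
    (g : ι → G) (hcov : ⋃ i ∈ s, g i • (H i : Set G) = Set.univ)
    (hd : (s : Set ι).PairwiseDisjoint (fun i => g i • (H i : Set G))) :
    (∀ i ∈ s, (H i).FiniteIndex) ∧ ∑ i ∈ s, ((H i).index : ℚ)⁻¹ = 1 := by
  classical
  have hfin : ∀ i ∈ s, (H i).FiniteIndex := by
    intro i hi
    have h := Subgroup.leftCoset_cover_filter_FiniteIndex hcov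
    have hmem : g i ∈ g i • (H i : Set G) := ⟨1, (H i).one_mem, by simp⟩
    have hx : g i ∈ ⋃ k ∈ s.filter (fun i => (H i).FiniteIndex), g k • (H k : Set G) :=
      h ▸ Set.mem_univ _
    simp only [Set.mem_iUnion, Finset.mem_filter] at hx
    obtain ⟨k, ⟨hk, hkf⟩, hx⟩ := hx
    by_cases hik : i = k
    · exact hik ▸ hkf
    · exact absurd hx (Set.disjoint_left.1 (hd hi hk hik) hmem)
  refine ⟨hfin, ?_⟩
  let M : Subgroup G := (⨅ i ∈ s, H i).normalCore
  have hinf : (⨅ i ∈ s, H i).FiniteIndex := Subgroup.finiteIndex_iInf' _ hfin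
  have hM : M.FiniteIndex := inferInstanceAs (Subgroup.normalCore _).FiniteIndex
  have hMle : ∀ i ∈ s, M ≤ H i := fun i hi =>
    (Subgroup.normalCore_le _).trans (iInf₂_le i hi)
  let π := QuotientGroup.mk' M
  have hπ : Function.Surjective π := QuotientGroup.mk'_surjective M
  have hmem : ∀ i ∈ s, ∀ x, π x ∈ π (g i) • ((H i).map π : Set (G ⧸ M)) ↔
      x ∈ g i • (H i : Set G) := by
    intro i hi x
    rw [mem_leftCoset_iff, mem_leftCoset_iff, ← map_inv, ← map_mul, SetLike.mem_coe,
      SetLike.mem_coe, ← Subgroup.mem_comap, Subgroup.comap_map_eq,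
      sup_eq_left.2 (by rw [QuotientGroup.ker_mk']; exact hMle i hi)]
  have key := sum_inv_index_of_finite s (fun i => (H i).map π) (fun i => π (g i)) (by
      rw [Set.eq_univ_iff_forall]
      intro y
      obtain ⟨x, rfl⟩ := hπ y
      have hx : x ∈ ⋃ i ∈ s, g i • (H i : Set G) := hcov ▸ Set.mem_univ x
      simp only [Set.mem_iUnion] at hx ⊢
      obtain ⟨i, hi, hx⟩ := hx
      exact ⟨i, hi, (hmem i hi x).2 hx⟩) (by
      intro i hi j hj hij
      refine Set.disjoint_left.2 fun y hy hy' => ?_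
      obtain ⟨x, rfl⟩ := hπ y
      exact Set.disjoint_left.1 (hd hi hj hij) ((hmem i hi x).1 hy) ((hmem j hj x).1 hy'))
  rw [← key]
  refine Finset.sum_congr rfl fun i hi => ?_
  rw [Subgroup.index_map_eq _ hπ (by rw [QuotientGroup.ker_mk']; exact hMle i hi)]

/-! ### Filtrations of a group indexed by positive levels -/

/-- A family of subgroups `K i j` which, on the levels `(i, j) > (0, 0)`, is decreasing for the
lexicographic-from-the-right order and has successive indices `[K i j : K (i + 1) j] = q ^ 4`.
Nothing is required at the remaining levels. -/
structure LevelFiltration {G : Type*} [Group G] (K : ℤ → ℤ → Subgroup G) (q : ℕ) : Prop where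
  two_le : 2 ≤ q
  anti : ∀ i j i' j', RLt (0, 0) (i, j) → RLex (i, j) (i', j') → K i' j' ≤ K i j
  relIndex_succ : ∀ i j, RLt (0, 0) (i, j) → (K (i + 1) j).relIndex (K i j) = q ^ 4

theorem mem_lmul {G : Type*} [Group G] (g x : G) (H : Subgroup G) :
    x ∈ lmul g (H : Set G) ↔ g⁻¹ * x ∈ H := by
  constructor
  · rintro ⟨y, hy, rfl⟩
    simpa using hy
  · intro h
    exact ⟨_, h, by simp⟩

theorem self_mem_lmul {G : Type*} [Group G] (g : G) (H : Subgroup G) :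
    g ∈ lmul g (H : Set G) := by
  simp [mem_lmul]

theorem le_of_lmul_subset {G : Type*} [Group G] {g g' : G} {H H' : Subgroup G}
    (h : lmul g (H : Set G) ⊆ lmul g' (H' : Set G)) : H ≤ H' ∧ g'⁻¹ * g ∈ H' := by
  have h1 := (mem_lmul _ _ _).1 (h (self_mem_lmul g H))
  refine ⟨fun x hx => ?_, h1⟩
  have h2 := (mem_lmul _ _ _).1 (h (show g * x ∈ lmul g (H : Set G) by
    rw [mem_lmul]; simpa using hx))
  simpa [mul_assoc] using H'.mul_mem (H'.inv_mem h1) h2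

theorem lmul_nested {G : Type*} [Group G] (g g' : G) {H H' : Subgroup G} (hle : H ≤ H') :
    Disjoint (lmul g (H : Set G)) (lmul g' (H' : Set G)) ∨
      lmul g (H : Set G) ⊆ lmul g' (H' : Set G) := by
  by_cases h : g'⁻¹ * g ∈ H'
  · right
    intro x hx
    rw [mem_lmul] at hx ⊢
    simpa [mul_assoc] using H'.mul_mem h (hle hx)
  · left
    refine Set.disjoint_left.2 fun x hx hx' => h ?_
    rw [mem_lmul] at hx hx'
    simpa [mul_assoc] using H'.mul_mem hx' (H'.inv_mem (hle hx))

theorem rlex_total (a b : ℤ × ℤ) : RLex a b ∨ RLex b a := by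
  unfold RLex; omega

namespace LevelFiltration

variable {G : Type*} [Group G] {K : ℤ → ℤ → Subgroup G} {q : ℕ}

theorem relIndex_add (hK : LevelFiltration K q) (i j : ℤ) (h : RLt (0, 0) (i, j)) (n : ℕ) :
    (K (i + n) j).relIndex (K i j) = q ^ (4 * n) := by
  induction n with
  | zero => simp
  | succ n ih =>
    have hpos : RLt (0, 0) (i + n, j) := by unfold RLt at *; simp at *; omega
    rw [← Subgroup.relIndex_mul_relIndex _ (K (i + n) j) _ ?_ ?_, ih, Nat.cast_succ, ← add_assoc,
      hK.relIndex_succ _ _ hpos]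
    · ring
    · exact hK.anti _ _ _ _ hpos (by unfold RLex; simp)
    · exact hK.anti _ _ _ _ h (by unfold RLex; simp)

/-- The index is infinite (`relIndex` is `0`): it would otherwise be divisible by `q ^ (4 * n)` for
every `n`, because `K (i + n) j` lies between the two groups. -/
theorem relIndex_eq_zero (hK : LevelFiltration K q) (i j i' j' : ℤ) (h : RLt (0, 0) (i, j))
    (hj : j < j') : (K i' j').relIndex (K i j) = 0 := by
  by_contra hne
  set r := (K i' j').relIndex (K i j) with hr
  have hdvd : q ^ (4 * r) ∣ r := by
    have hpos : RLt (0, 0) (i + r, j) := by unfold RLt at *; simp at *; omega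
    have h1 := Subgroup.relIndex_mul_relIndex (K i' j') (K (i + r) j) (K i j)
      (hK.anti _ _ _ _ hpos (Or.inl hj)) (hK.anti _ _ _ _ h (by unfold RLex; simp))
    rw [hK.relIndex_add i j h, ← hr] at h1
    exact Dvd.intro_left _ h1
  have h2 := Nat.le_of_dvd (Nat.pos_of_ne_zero hne) hdvd
  have h3 : 4 * r < q ^ (4 * r) := Nat.lt_pow_self hK.two_le
  omega

theorem level_of_le (hK : LevelFiltration K q) {i j i' j' : ℤ} (h : RLt (0, 0) (i, j))
    (h' : RLt (0, 0) (i', j')) (hle : K i' j' ≤ K i j) : RLex (i, j) (i', j') := by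
  by_contra hcon
  have hlt : RLt (i', j') (i, j) := by unfold RLex at hcon; unfold RLt; simp at *; omega
  have h1 : (K i j).relIndex (K i' j') = 1 := Subgroup.relIndex_eq_one.2 hle
  rcases hlt with hlt | ⟨hj, hi⟩
  · rw [hK.relIndex_eq_zero _ _ _ _ h' hlt] at h1
    exact zero_ne_one h1
  · simp only at hj hi
    obtain ⟨n, hn⟩ := Int.le.dest hi.le
    subst hj
    rw [← hn, hK.relIndex_add _ _ h'] at h1
    have h3 : 4 * n < q ^ (4 * n) := Nat.lt_pow_self hK.two_le
    omega

theorem level_unique (hK : LevelFiltration K q) (g g' : G) (i j i' j' : ℤ)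
    (h : RLt (0, 0) (i, j)) (h' : RLt (0, 0) (i', j'))
    (heq : lmul g (K i j : Set G) = lmul g' (K i' j' : Set G)) : i = i' ∧ j = j' := by
  have h1 := hK.level_of_le h' h (le_of_lmul_subset heq.subset).1
  have h2 := hK.level_of_le h h' (le_of_lmul_subset heq.superset).1
  unfold RLex at h1 h2
  simp at h1 h2
  omega

/-- The value `λ q^{-4i} X^{4j}` of a coset of level `(i, j)`. -/
def wt (lam : ℝ) (q : ℕ) (i j : ℤ) : LaurentSeries ℝ :=
  HahnSeries.single (4 * j) (lam * (q : ℝ) ^ (-(4 * i)))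

/-- Additivity of the values: when a coset is a finite disjoint union of cosets, the indices of the
smaller groups are finite, so they all have the same second coordinate `j₀`, and each value is
the value of the large coset divided by the index. -/
theorem wt_partition (hK : LevelFiltration K q) (lam : ℝ) {ι : Type*} (s : Finset ι)
    (g₀ : G) (i₀ j₀ : ℤ) (h₀ : RLt (0, 0) (i₀, j₀)) (g : ι → G) (i j : ι → ℤ)
    (hpos : ∀ k ∈ s, RLt (0, 0) (i k, j k))
    (hd : (s : Set ι).PairwiseDisjoint fun k => lmul (g k) (K (i k) (j k) : Set G))
    (hcov : lmul g₀ (K i₀ j₀ : Set G) = ⋃ k ∈ s, lmul (g k) (K (i k) (j k) : Set G)) :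
    wt lam q i₀ j₀ = ∑ k ∈ s, wt lam q (i k) (j k) := by
  classical
  have hsub : ∀ k ∈ s, K (i k) (j k) ≤ K i₀ j₀ ∧ g₀⁻¹ * g k ∈ K i₀ j₀ := fun k hk =>
    le_of_lmul_subset (by
      rw [hcov]
      exact Set.subset_biUnion_of_mem (u := fun k => lmul (g k) (K (i k) (j k) : Set G)) hk)
  -- Translated by `g₀⁻¹`, the partition becomes one of the group `K i₀ j₀` into cosets of the `H k`.
  let H : ι → Subgroup (K i₀ j₀) := fun k => (K (i k) (j k)).subgroupOf (K i₀ j₀)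
  let γ : ι → K i₀ j₀ := fun k => if hk : k ∈ s then ⟨g₀⁻¹ * g k, (hsub k hk).2⟩ else 1
  have hmem : ∀ k ∈ s, ∀ x : K i₀ j₀, x ∈ lmul (γ k) (H k : Set (K i₀ j₀)) ↔
      g₀ * x ∈ lmul (g k) (K (i k) (j k) : Set G) := by
    intro k hk x
    rw [mem_lmul, mem_lmul, Subgroup.mem_subgroupOf]
    simp [γ, hk, mul_assoc]
  obtain ⟨hfin, hsum⟩ := finiteIndex_and_sum_inv_index s H γ (by
      rw [Set.eq_univ_iff_forall]
      intro x
      have hx : g₀ * x ∈ lmul g₀ (K i₀ j₀ : Set G) := by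
        rw [mem_lmul]; simp
      rw [hcov] at hx
      simp only [Set.mem_iUnion] at hx ⊢
      obtain ⟨k, hk, hx⟩ := hx
      exact ⟨k, hk, (hmem k hk x).2 hx⟩) (by
      intro k hk l hl hkl
      refine Set.disjoint_left.2 fun x hx hx' => ?_
      exact Set.disjoint_left.1 (hd hk hl hkl) ((hmem k hk x).1 hx) ((hmem l hl x).1 hx'))
  have hq : (q : ℝ) ≠ 0 := by
    have := hK.two_le
    positivity
  have hterm : ∀ k ∈ s, wt lam q (i k) (j k)
      = HahnSeries.single (4 * j₀) ((((H k).index : ℚ)⁻¹ : ℚ) * (lam * (q : ℝ) ^ (-(4 * i₀)))) := by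
    intro k hk
    have hidx : (H k).index ≠ 0 := (hfin k hk).index_ne_zero
    have hidx' : (H k).index = (K (i k) (j k)).relIndex (K i₀ j₀) := rfl
    rcases hK.level_of_le h₀ (hpos k hk) (hsub k hk).1 with hlt | ⟨hj, hi⟩
    · exact absurd (hK.relIndex_eq_zero _ _ _ _ h₀ hlt) hidx
    · simp only at hj hi
      obtain ⟨n, hn⟩ := Int.le.dest hi
      rw [← hj, ← hn, hK.relIndex_add _ _ h₀] at hidx'
      rw [wt, ← hj, hidx', ← hn]
      congr 1
      push_cast
      rw [show -(4 * (i₀ + (n : ℤ))) = -((4 * n : ℕ) : ℤ) + -(4 * i₀) by push_cast; ring,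
        zpow_add₀ hq, _root_.zpow_neg, zpow_natCast]
      ring
  rw [Finset.sum_congr rfl hterm]
  refine Eq.trans ?_ (map_sum (HahnSeries.single.addMonoidHom (4 * j₀)) _ s)
  rw [← Finset.sum_mul, ← Rat.cast_sum, hsum, Rat.cast_one, one_mul]
  rfl

end LevelFiltration

/-! ### Congruence subgroups over a local ring -/

section Congruence

open IsLocalRing

variable {F : Type*} [Field F]

theorem mapMatrix_one_add_smul_injective {O : Subring F} {τ : O} (hτ0 : τ ≠ 0)
    {A B : Matrix (Fin 2) (Fin 2) O}
    (h : O.subtype.mapMatrix (1 + τ • A) = O.subtype.mapMatrix (1 + τ • B)) : A = B := by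
  have h1 : 1 + τ • A = 1 + τ • B :=
    Matrix.map_injective (Subtype.val_injective) h
  have h2 := add_left_cancel h1
  refine Matrix.ext fun a b => ?_
  have h3 := congrFun (congrFun h2 a) b
  simp only [Matrix.smul_apply, smul_eq_mul] at h3
  exact mul_left_cancel₀ hτ0 h3

variable (O : Subring F) [IsLocalRing O]

theorem isUnit_one_add_smul {τ : O} (hτ : τ ∈ maximalIdeal O) (A : Matrix (Fin 2) (Fin 2) O) :
    IsUnit (1 + τ • A) := by
  rw [Matrix.isUnit_iff_isUnit_det]
  have h : (1 + τ • A).det = 1 - τ * (-(A 0 0 + A 1 1 + τ * A.det)) := by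
    simp [Matrix.det_fin_two]
    ring
  rw [h]
  by_contra hcon
  have h1 : 1 - τ * (-(A 0 0 + A 1 1 + τ * A.det)) ∈ maximalIdeal O := hcon
  have h2 := (maximalIdeal O).add_mem h1 ((maximalIdeal O).mul_mem_right
    (-(A 0 0 + A 1 1 + τ * A.det)) hτ)
  rw [sub_add_cancel] at h2
  exact h2 isUnit_one

/-- The subgroup `1 + τ M₂(O)` of `GL₂(F)`, for `τ` in the maximal ideal of the local ring `O`. -/
def congruenceSubgroup (τ : O) (hτ : τ ∈ maximalIdeal O) : Subgroup (GL (Fin 2) F) where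
  carrier := {g | ∃ A : Matrix (Fin 2) (Fin 2) O,
    (g : Matrix (Fin 2) (Fin 2) F) = O.subtype.mapMatrix (1 + τ • A)}
  one_mem' := ⟨0, by simp⟩
  mul_mem' := by
    rintro g h ⟨A, hA⟩ ⟨B, hB⟩
    refine ⟨A + B + τ • (A * B), ?_⟩
    rw [Units.val_mul, hA, hB, ← map_mul]
    congr 1
    simp only [add_mul, mul_add, one_mul, mul_one, smul_mul_assoc, mul_smul_comm, smul_add]
    abel
  inv_mem' := by
    rintro g ⟨A, hA⟩
    obtain ⟨B, hB⟩ := (isUnit_one_add_smul O hτ A).exists_right_inv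
    refine ⟨-(A * B), ?_⟩
    have h1 : 1 + τ • (-(A * B)) = B := by
      rw [add_mul, one_mul, smul_mul_assoc] at hB
      rw [← hB, smul_neg]
      abel
    rw [h1, ← mul_one ((g⁻¹ : GL (Fin 2) F) : Matrix (Fin 2) (Fin 2) F),
      ← map_one (O.subtype.mapMatrix (m := Fin 2)), ← hB, map_mul, ← hA, ← mul_assoc,
      ← Units.val_mul, inv_mul_cancel, Units.val_one, one_mul]

variable {O}

theorem mem_congruenceSubgroup {τ : O} {hτ : τ ∈ maximalIdeal O} {g : GL (Fin 2) F} :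
    g ∈ congruenceSubgroup O τ hτ ↔ ∃ A : Matrix (Fin 2) (Fin 2) O,
      (g : Matrix (Fin 2) (Fin 2) F) = O.subtype.mapMatrix (1 + τ • A) := Iff.rfl

/-- If `p` generates the maximal ideal, then `1 + τ p M₂(O)` has index `q ^ 4` in `1 + τ M₂(O)`: it
is the kernel of the surjective homomorphism `1 + τ A ↦ A mod p` onto the additive group of
`2 × 2` matrices over the residue field. -/
theorem relIndex_congruenceSubgroup [Finite (ResidueField O)] {τ p : O}
    (hτ : τ ∈ maximalIdeal O) (hτ0 : τ ≠ 0) (hp : maximalIdeal O = Ideal.span {p})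
    (hτp : τ * p ∈ maximalIdeal O) :
    (congruenceSubgroup O (τ * p) hτp).relIndex (congruenceSubgroup O τ hτ)
      = Nat.card (ResidueField O) ^ 4 := by
  choose a ha using fun g : congruenceSubgroup O τ hτ => mem_congruenceSubgroup.1 g.2
  have ha' : ∀ (g : congruenceSubgroup O τ hτ) A,
      ((g : GL (Fin 2) F) : Matrix (Fin 2) (Fin 2) F) = O.subtype.mapMatrix (1 + τ • A) →
      a g = A := fun g A h => mapMatrix_one_add_smul_injective hτ0 ((ha g).symm.trans h)
  have ha_mul : ∀ g h, a (g * h) = a g + a h + τ • (a g * a h) := by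
    intro g h
    apply ha'
    rw [Subgroup.coe_mul, Units.val_mul, ha g, ha h, ← map_mul]
    congr 1
    simp only [add_mul, mul_add, one_mul, mul_one, smul_mul_assoc, mul_smul_comm, smul_add]
    abel
  let r := (residue O).mapMatrix (m := Fin 2)
  have hr : ∀ A, r (τ • A) = 0 := by
    intro A
    ext x y
    simp [r, (residue_eq_zero_iff τ).2 hτ]
  let φ : congruenceSubgroup O τ hτ →* Multiplicative (Matrix (Fin 2) (Fin 2) (ResidueField O)) :=
    MonoidHom.mk' (fun g => Multiplicative.ofAdd (r (a g))) (by
      intro g h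
      rw [ha_mul, map_add r, map_add r, hr, add_zero, ofAdd_add])
  have hφ : Function.Surjective φ := by
    intro B
    obtain ⟨A, hA⟩ : ∃ A, r A = Multiplicative.toAdd B := by
      choose A hA using fun x y => residue_surjective (Multiplicative.toAdd B x y)
      exact ⟨Matrix.of A, by ext x y; exact hA x y⟩
    obtain ⟨u, hu⟩ := (isUnit_one_add_smul O hτ A).map O.subtype.mapMatrix
    refine ⟨⟨u, A, hu⟩, ?_⟩
    change Multiplicative.ofAdd (r (a _)) = B
    rw [ha' ⟨u, A, hu⟩ A hu, hA]
    rfl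
  have hker : φ.ker = (congruenceSubgroup O (τ * p) hτp).subgroupOf
      (congruenceSubgroup O τ hτ) := by
    ext g
    rw [MonoidHom.mem_ker, Subgroup.mem_subgroupOf, mem_congruenceSubgroup]
    change r (a g) = 0 ↔ _
    constructor
    · intro h
      have h1 : ∀ x y, ∃ b, p * b = a g x y := by
        intro x y
        have h2 : residue O (a g x y) = 0 := congrFun (congrFun h x) y
        rw [residue_eq_zero_iff, hp, Ideal.mem_span_singleton'] at h2
        obtain ⟨b, hb⟩ := h2
        exact ⟨b, by rw [mul_comm, hb]⟩
      choose B hB using h1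
      refine ⟨Matrix.of B, ?_⟩
      rw [ha g, mul_smul]
      congr 3
      exact Matrix.ext fun x y => (hB x y).symm
    · rintro ⟨B, hB⟩
      rw [mul_smul] at hB
      rw [ha' g _ hB]
      ext x y
      have : residue O p = 0 := by
        rw [residue_eq_zero_iff, hp]
        exact Ideal.mem_span_singleton_self p
      simp [r, this]
  rw [Subgroup.relIndex, ← hker, Subgroup.index_ker, MonoidHom.range_eq_top.2 hφ,
    Subgroup.card_top]
  have := Fintype.ofFinite (ResidueField O)
  rw [Nat.card_congr Multiplicative.toAdd]
  simp only [Matrix]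
  rw [Nat.card_fun, Nat.card_fun]
  simp [← pow_mul]

end Congruence

/-! ### Presentations as integral combinations of distinguished sets -/

section Cycle

variable {α M : Type*} [AddCommGroup M] {Dist : Set α → Prop}

/-- The formal combination of a ddd-presentation: the sum of its big shells minus the sum of its
small shells, in the free abelian group on subsets of `α`. -/
def DDDPres.cycle (P : DDDPres α Dist) : Set α →₀ ℤ :=
  (P.parts.map fun Q =>
    (∑ D ∈ Q.A, Finsupp.single D (1 : ℤ)) - ∑ D ∈ Q.B, Finsupp.single D (1 : ℤ)).sum

/-- The homomorphism from the free abelian group on subsets of `α` extending `w`. -/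
def evalHom (w : Set α → M) : (Set α →₀ ℤ) →+ M :=
  Finsupp.liftAddHom fun D => zmultiplesHom M (w D)

theorem evalHom_apply (w : Set α → M) (z : Set α →₀ ℤ) :
    evalHom w z = ∑ D ∈ z.support, z D • w D := by
  simp [evalHom, Finsupp.sum]

theorem evalHom_cycle (w : Set α → M) (P : DDDPres α Dist) :
    evalHom w P.cycle = (P.parts.map fun Q => (∑ D ∈ Q.A, w D) - ∑ D ∈ Q.B, w D).sum := by
  rw [DDDPres.cycle, map_list_sum, List.map_map]
  congr 1
  refine List.map_congr_left fun Q _ => ?_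
  simp [evalHom, map_sub, map_sum]

theorem dist_of_mem_support_cycle (P : DDDPres α Dist) {D : Set α}
    (hD : D ∈ P.cycle.support) : Dist D := by
  have h : P.cycle ∈ Finsupp.supported ℤ ℤ {D | Dist D} := by
    refine list_sum_mem fun z hz => ?_
    obtain ⟨Q, _, rfl⟩ := List.mem_map.1 hz
    exact sub_mem (sum_mem fun D hD => Finsupp.single_mem_supported ℤ _ (Q.distA D hD))
      (sum_mem fun D hD => Finsupp.single_mem_supported ℤ _ (Q.distB D hD))
  exact h hD

/-- The combination attached to a presentation, read as an integer-valued function, is the indicator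
function of the represented set: inside a part this uses `⋃ℬ ⊆ ⋃𝒜`, and across parts the
disjointness of the represented sets. -/
theorem evalHom_indicator_cycle (P : DDDPres α Dist) (x : α) :
    evalHom (fun D => D.indicator (fun _ => (1 : ℤ)) x) P.cycle
      = P.repr.indicator (fun _ => (1 : ℤ)) x := by
  rw [evalHom_cycle, DDDPres.repr]
  have hpart : ∀ Q : DDPres α Dist, (∑ D ∈ Q.A, D.indicator (fun _ => (1 : ℤ)) x)
      - ∑ D ∈ Q.B, D.indicator (fun _ => (1 : ℤ)) x = Q.repr.indicator (fun _ => (1 : ℤ)) x := by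
    intro Q
    rw [sum_indicator_eq_indicator_sUnion _ Q.disjA, sum_indicator_eq_indicator_sUnion _ Q.disjB,
      DDPres.repr]
    by_cases hB : x ∈ ⋃₀ (Q.B : Set (Set α))
    · rw [Set.indicator_of_mem hB, Set.indicator_of_mem (Q.subset hB),
        Set.indicator_of_notMem fun h => h.2 hB, sub_self]
    · by_cases hA : x ∈ ⋃₀ (Q.A : Set (Set α))
      · rw [Set.indicator_of_mem hA, Set.indicator_of_notMem hB,
          Set.indicator_of_mem (Set.mem_sdiff_of_mem hA hB), sub_zero]
      · rw [Set.indicator_of_notMem hA, Set.indicator_of_notMem hB,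
          Set.indicator_of_notMem fun h => hA h.1, sub_zero]
  simp_rw [hpart]
  obtain ⟨L, hL⟩ := P
  dsimp only
  induction L with
  | nil => simp
  | cons Q L ih =>
    rw [List.pairwise_cons] at hL
    rw [List.map_cons, List.sum_cons, ih hL.2]
    have hdisj : Disjoint Q.repr (⋃ R ∈ L, R.repr) := by
      simp only [Set.disjoint_iUnion_right]
      exact hL.1
    have hU : (⋃ R ∈ Q :: L, R.repr) = Q.repr ∪ ⋃ R ∈ L, R.repr := by
      ext y
      simp
    rw [hU, Set.indicator_union_of_disjoint hdisj]

/-- For a laminar family of distinguished sets and a valuation additive on finite partitions, `mu0`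
depends only on the represented set. -/
theorem mu0_eq_of_repr_eq {Dist : Set α → Prop} (val : Set α → LaurentSeries ℝ)
    (hempty : val ∅ = 0)
    (hlam : ∀ D E, Dist D → Dist E → Disjoint D E ∨ D ⊆ E ∨ E ⊆ D)
    (hadd : ∀ D, Dist D → D.Nonempty → ∀ T : Finset (Set α), (∀ E ∈ T, Dist E ∧ E.Nonempty) →
      (∀ E ∈ T, ∀ E' ∈ T, E ≠ E' → Disjoint E E') → D = ⋃₀ (T : Set (Set α)) →
      val D = ∑ E ∈ T, val E)
    (P P' : DDDPres α Dist) (h : P'.repr = P.repr) : mu0 val P' = mu0 val P := by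
  classical
  rw [← sub_eq_zero, mu0, mu0, ← evalHom_cycle, ← evalHom_cycle, ← map_sub, evalHom_apply]
  set z := P'.cycle - P.cycle with hz
  have hdist : ∀ D ∈ z.support, Dist D := by
    intro D hD
    rcases Finset.mem_union.1 (Finsupp.support_sub hD) with h | h
    · exact dist_of_mem_support_cycle P' h
    · exact dist_of_mem_support_cycle P h
  have hzero : ∀ x, ∑ D ∈ z.support, z D • D.indicator (fun _ => (1 : ℤ)) x = 0 := by
    intro x
    rw [← evalHom_apply (fun D => D.indicator (fun _ => (1 : ℤ)) x), hz, map_sub,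
      evalHom_indicator_cycle, evalHom_indicator_cycle, h, sub_self]
  -- The empty set may carry a nonzero coefficient, but contributes nothing to either sum.
  have hS : ∀ {N : Type _} [AddCommGroup N] (w : Set α → N), w ∅ = 0 →
      ∑ D ∈ z.support.filter Set.Nonempty, z D • w D = ∑ D ∈ z.support, z D • w D := by
    intro N _ w hw
    refine Finset.sum_filter_of_ne fun D _ hne => ?_
    rw [Set.nonempty_iff_ne_empty]
    rintro rfl
    exact hne (by rw [hw, smul_zero])
  rw [← hS val hempty]
  refine zero_of_indicator_sum_zero Dist val hlam hadd _ _ z rfl (fun D hD => ?_) fun x => ?_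
  · rw [Finset.mem_filter] at hD
    exact ⟨hdist D hD.1, hD.2⟩
  · rw [← hzero x, ← hS (fun D => D.indicator (fun _ => (1 : ℤ)) x) (by simp)]
    simp only [smul_eq_mul]

end Cycle

/-! ### The filtration attached to a rank-two valuation -/

section Valuation

variable {F : Type*} [Field F] {v : F → ℤ × ℤ}

theorem v_one (hv_mul : ∀ x y : F, x ≠ 0 → y ≠ 0 → v (x * y) = v x + v y) : v 1 = 0 := by
  have h := hv_mul 1 1 one_ne_zero one_ne_zero
  rw [mul_one] at h
  simpa using h

theorem v_inv (hv_mul : ∀ x y : F, x ≠ 0 → y ≠ 0 → v (x * y) = v x + v y) {x : F} (hx : x ≠ 0) :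
    v x⁻¹ = -v x := by
  have h := hv_mul x x⁻¹ hx (inv_ne_zero hx)
  rw [mul_inv_cancel₀ hx, v_one hv_mul] at h
  exact eq_neg_of_add_eq_zero_right h.symm

theorem v_zpow (hv_mul : ∀ x y : F, x ≠ 0 → y ≠ 0 → v (x * y) = v x + v y) {x : F} (hx : x ≠ 0)
    (n : ℤ) : v (x ^ n) = n • v x := by
  induction n using Int.induction_on with
  | zero => simp [v_one hv_mul]
  | succ n ih => rw [zpow_add_one₀ hx, hv_mul _ _ (zpow_ne_zero _ hx) hx, ih, add_smul, one_smul]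
  | pred n ih =>
    rw [zpow_sub_one₀ hx, hv_mul _ _ (zpow_ne_zero _ hx) (inv_ne_zero hx), ih, v_inv hv_mul hx,
      sub_smul, one_smul, sub_eq_add_neg]

theorem v_uniformizer (hv_mul : ∀ x y : F, x ≠ 0 → y ≠ 0 → v (x * y) = v x + v y)
    {t1 t2 : F} (ht1 : t1 ≠ 0) (ht2 : t2 ≠ 0)
    (hvt1 : v t1 = (1, 0)) (hvt2 : v t2 = (0, 1)) (i j : ℤ) : v (t1 ^ i * t2 ^ j) = (i, j) := by
  rw [hv_mul _ _ (zpow_ne_zero _ ht1) (zpow_ne_zero _ ht2), v_zpow hv_mul ht1, v_zpow hv_mul ht2,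
    hvt1, hvt2]
  simp

theorem mem_maximalIdeal_iff (hv_mul : ∀ x y : F, x ≠ 0 → y ≠ 0 → v (x * y) = v x + v y)
    (O : Subring F) (hO : ∀ x : F, x ∈ O ↔ x = 0 ∨ RLex (0, 0) (v x)) [IsLocalRing O] (x : O) :
    x ∈ IsLocalRing.maximalIdeal O ↔ (x : F) = 0 ∨ RLt (0, 0) (v x) := by
  rw [IsLocalRing.mem_maximalIdeal, mem_nonunits_iff]
  by_cases hx : (x : F) = 0
  · have : x = 0 := Subtype.ext hx
    simp [this]
  have hunit : IsUnit x ↔ (x : F)⁻¹ ∈ O := by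
    constructor
    · rintro ⟨u, rfl⟩
      have : ((u : O) : F)⁻¹ = ((u⁻¹ : Oˣ) : O) := by
        rw [inv_eq_iff_eq_inv]
        refine eq_inv_of_mul_eq_one_left ?_
        rw [← Subring.coe_mul, Units.mul_inv, Subring.coe_one]
      rw [this]
      exact Subtype.coe_prop _
    · intro h
      exact IsUnit.of_mul_eq_one ⟨(x : F)⁻¹, h⟩ (Subtype.ext (mul_inv_cancel₀ hx))
  have hpos := (hO x).1 x.2
  rw [hunit, hO, v_inv hv_mul hx]
  simp only [inv_eq_zero, hx, false_or] at hpos ⊢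
  unfold RLex RLt at *
  simp only [Prod.fst_neg, Prod.snd_neg] at *
  omega

theorem exists_mul_of_rlex (hv_mul : ∀ x y : F, x ≠ 0 → y ≠ 0 → v (x * y) = v x + v y)
    (O : Subring F) (hO : ∀ x : F, x ∈ O ↔ x = 0 ∨ RLex (0, 0) (v x)) {x y : F}
    (hx : x ≠ 0) (hy : y = 0 ∨ RLex (v x) (v y)) : ∃ c ∈ O, y = x * c := by
  refine ⟨x⁻¹ * y, ?_, by rw [mul_inv_cancel_left₀ hx]⟩
  rw [hO]
  by_cases hy0 : y = 0
  · simp [hy0]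
  · right
    have h := hy.resolve_left hy0
    rw [hv_mul _ _ (inv_ne_zero hx) hy0, v_inv hv_mul hx]
    unfold RLex at *
    simp only [Prod.fst_neg, Prod.snd_neg, Prod.fst_add, Prod.snd_add] at *
    omega

theorem Kmat_eq_congruenceSubgroup (O : Subring F) [IsLocalRing O] (t1 t2 : F) (i j : ℤ) (τ : O)
    (hτ : τ ∈ IsLocalRing.maximalIdeal O) (h : (τ : F) = t1 ^ i * t2 ^ j) :
    (congruenceSubgroup O τ hτ : Set (GL (Fin 2) F)) = Kmat O t1 t2 i j := by
  ext g
  rw [SetLike.mem_coe, mem_congruenceSubgroup]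
  constructor
  · rintro ⟨A, hA⟩ a b
    refine ⟨A a b, (A a b).2, ?_⟩
    rw [hA, ← h]
    by_cases hab : a = b <;> simp [Matrix.one_apply, hab]
  · intro hg
    choose A hAO hA using hg
    refine ⟨Matrix.of fun a b => ⟨A a b, hAO a b⟩, ?_⟩
    ext a b
    rw [hA, ← h]
    by_cases hab : a = b <;> simp [Matrix.one_apply, hab]

/-- The sets `K_{i,j}` with `(i,j) > (0,0)` are subgroups forming a level filtration. The function
`K` takes the irrelevant value `⊥` at the other levels. -/
theorem exists_levelFiltration (hv_mul : ∀ x y : F, x ≠ 0 → y ≠ 0 → v (x * y) = v x + v y)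
    (O : Subring F) (hO : ∀ x : F, x ∈ O ↔ x = 0 ∨ RLex (0, 0) (v x))
    {t1 t2 : F} (ht1 : t1 ≠ 0) (ht2 : t2 ≠ 0)
    (hvt1 : v t1 = (1, 0)) (hvt2 : v t2 = (0, 1))
    [IsLocalRing O] [Finite (IsLocalRing.ResidueField O)] :
    ∃ K : ℤ → ℤ → Subgroup (GL (Fin 2) F),
      LevelFiltration K (Nat.card (IsLocalRing.ResidueField O)) ∧
      ∀ i j, RLt (0, 0) (i, j) → (K i j : Set (GL (Fin 2) F)) = Kmat O t1 t2 i j := by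
  classical
  have hT0 : ∀ i j : ℤ, t1 ^ i * t2 ^ j ≠ 0 := fun i j =>
    mul_ne_zero (zpow_ne_zero _ ht1) (zpow_ne_zero _ ht2)
  have hvT := v_uniformizer hv_mul ht1 ht2 hvt1 hvt2
  have hTO : ∀ i j, RLt (0, 0) (i, j) → t1 ^ i * t2 ^ j ∈ O := by
    intro i j h
    rw [hO, hvT]
    right
    unfold RLt at h
    unfold RLex
    simp only at *
    omega
  have hTm : ∀ i j (h : RLt (0, 0) (i, j)),
      (⟨t1 ^ i * t2 ^ j, hTO i j h⟩ : O) ∈ IsLocalRing.maximalIdeal O := by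
    intro i j h
    rw [mem_maximalIdeal_iff hv_mul O hO]
    right
    rwa [hvT]
  have hpos1 : RLt (0, 0) (1, 0) := Or.inr ⟨rfl, one_pos⟩
  let p : O := ⟨t1 ^ (1 : ℤ) * t2 ^ (0 : ℤ), hTO 1 0 hpos1⟩
  -- Since `(1, 0)` is the least positive level, `t₁` generates the maximal ideal.
  have hp : IsLocalRing.maximalIdeal O = Ideal.span {p} := by
    apply le_antisymm
    · intro x hx
      rw [mem_maximalIdeal_iff hv_mul O hO] at hx
      obtain ⟨c, hc, hxc⟩ := exists_mul_of_rlex hv_mul O hO (hT0 1 0) (y := (x : F)) (by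
        refine hx.imp_right fun h => ?_
        rw [hvT]
        unfold RLt at h
        unfold RLex
        simp only at *
        omega)
      exact Ideal.mem_span_singleton'.2 ⟨⟨c, hc⟩, Subtype.ext (by rw [hxc, mul_comm]; rfl)⟩
    · rw [Ideal.span_singleton_le_iff_mem]
      exact hTm 1 0 hpos1
  let K : ℤ → ℤ → Subgroup (GL (Fin 2) F) := fun i j =>
    if h : RLt (0, 0) (i, j) then
      congruenceSubgroup O ⟨t1 ^ i * t2 ^ j, hTO i j h⟩ (hTm i j h) else ⊥
  have hK : ∀ i j (h : RLt (0, 0) (i, j)),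
      K i j = congruenceSubgroup O ⟨t1 ^ i * t2 ^ j, hTO i j h⟩ (hTm i j h) :=
    fun i j h => dif_pos h
  have hKmat : ∀ i j, RLt (0, 0) (i, j) →
      (K i j : Set (GL (Fin 2) F)) = Kmat O t1 t2 i j := by
    intro i j h
    rw [hK i j h]
    exact Kmat_eq_congruenceSubgroup O t1 t2 i j _ _ rfl
  refine ⟨K, ⟨Finite.one_lt_card, ?_, ?_⟩, hKmat⟩
  · intro i j i' j' h hle
    have h' : RLt (0, 0) (i', j') := by
      unfold RLt RLex at *
      simp only at *
      omega
    obtain ⟨c, hc, hcT⟩ := exists_mul_of_rlex hv_mul O hO (hT0 i j) (y := t1 ^ i' * t2 ^ j')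
      (Or.inr (by rwa [hvT, hvT]))
    rw [← SetLike.coe_subset_coe, hKmat i j h, hKmat i' j' h']
    intro g hg a b
    obtain ⟨d, hd, hgd⟩ := hg a b
    exact ⟨c * d, O.mul_mem hc hd, by rw [hgd, hcT, mul_assoc]⟩
  · intro i j h
    have h' : RLt (0, 0) (i + 1, j) := by
      unfold RLt at *
      simp only at *
      omega
    have hmul : (⟨t1 ^ (i + 1) * t2 ^ j, hTO (i + 1) j h'⟩ : O)
        = ⟨t1 ^ i * t2 ^ j, hTO i j h⟩ * p := by
      refine Subtype.ext ?_
      change t1 ^ (i + 1) * t2 ^ j = t1 ^ i * t2 ^ j * (t1 ^ (1 : ℤ) * t2 ^ (0 : ℤ))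
      rw [zpow_add₀ ht1, zpow_zero, mul_one]
      ring
    have hmem : (⟨t1 ^ i * t2 ^ j, hTO i j h⟩ : O) * p ∈ IsLocalRing.maximalIdeal O :=
      hmul ▸ hTm (i + 1) j h'
    rw [hK i j h, hK (i + 1) j h', ← relIndex_congruenceSubgroup (hTm i j h)
      (fun h0 => hT0 i j (congrArg Subtype.val h0)) hp hmem]
    congr 2

end Valuation

/-- Fix `λ ≠ 0` in `ℝ`.  Every nonempty distinguished set `g K_{i,j}`
determines the pair `(i,j)` uniquely; assigning to it the value `λ q^{−4i} X^{4j}` (and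
`0` to the empty set) yields a function `val` on distinguished sets, and the associated
value `μ₀` of ddd-presentations is invariant under refinement. -/
theorem statement2
    {F : Type*} [Field F] (v : F → ℤ × ℤ)
    (hv_mul : ∀ x y : F, x ≠ 0 → y ≠ 0 → v (x * y) = v x + v y)
    (hv_add : ∀ x y : F, x ≠ 0 → y ≠ 0 → x + y ≠ 0 →
      RLex (v x) (v (x + y)) ∨ RLex (v y) (v (x + y)))
    (hv_surj : ∀ p : ℤ × ℤ, ∃ x : F, x ≠ 0 ∧ v x = p)
    (O : Subring F) (hO : ∀ x : F, x ∈ O ↔ x = 0 ∨ RLex (0, 0) (v x))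
    (t1 t2 : F) (ht1 : t1 ≠ 0) (ht2 : t2 ≠ 0)
    (hvt1 : v t1 = (1, 0)) (hvt2 : v t2 = (0, 1))
    [IsLocalRing ↥O] [Finite (IsLocalRing.ResidueField ↥O)] (q : ℕ)
    (hq : Nat.card (IsLocalRing.ResidueField ↥O) = q)
    (lam : ℝ) (hlam : lam ≠ 0) :
    (∀ (g g' : GL (Fin 2) F) (i j i' j' : ℤ),
      RLt (0, 0) (i, j) → RLt (0, 0) (i', j') →
      lmul g (Kmat O t1 t2 i j) = lmul g' (Kmat O t1 t2 i' j') → i = i' ∧ j = j') ∧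
    ∃ val : Set (GL (Fin 2) F) → LaurentSeries ℝ,
      val ∅ = 0 ∧
      (∀ (g : GL (Fin 2) F) (i j : ℤ), RLt (0, 0) (i, j) →
        val (lmul g (Kmat O t1 t2 i j))
          = HahnSeries.single (4 * j) (lam * (q : ℝ) ^ (-(4 * i)))) ∧
      (∀ P P' : DDDPres (GL (Fin 2) F) (Dist2 O t1 t2),
        P'.Refines P → mu0 val P' = mu0 val P) := by
  classical
  obtain ⟨K, hK, hKmat⟩ := exists_levelFiltration hv_mul O hO ht1 ht2 hvt1 hvt2
  rw [hq] at hK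
  have huniq : ∀ (g g' : GL (Fin 2) F) (i j i' j' : ℤ),
      RLt (0, 0) (i, j) → RLt (0, 0) (i', j') →
      lmul g (Kmat O t1 t2 i j) = lmul g' (Kmat O t1 t2 i' j') → i = i' ∧ j = j' := by
    intro g g' i j i' j' h h' heq
    rw [← hKmat i j h, ← hKmat i' j' h'] at heq
    exact hK.level_unique g g' i j i' j' h h' heq
  have hcoset_ne : ∀ (g : GL (Fin 2) F) (i j : ℤ), RLt (0, 0) (i, j) →
      (lmul g (Kmat O t1 t2 i j)).Nonempty := by
    intro g i j h
    rw [← hKmat i j h]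
    exact ⟨g, self_mem_lmul g _⟩
  let val : Set (GL (Fin 2) F) → LaurentSeries ℝ := fun D =>
    if h : ∃ p : GL (Fin 2) F × ℤ × ℤ, RLt (0, 0) (p.2.1, p.2.2) ∧
      D = lmul p.1 (Kmat O t1 t2 p.2.1 p.2.2)
    then LevelFiltration.wt lam q h.choose.2.1 h.choose.2.2 else 0
  have hval : ∀ (g : GL (Fin 2) F) (i j : ℤ), RLt (0, 0) (i, j) →
      val (lmul g (Kmat O t1 t2 i j)) = LevelFiltration.wt lam q i j := by
    intro g i j h
    have hex : ∃ p : GL (Fin 2) F × ℤ × ℤ, RLt (0, 0) (p.2.1, p.2.2) ∧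
        lmul g (Kmat O t1 t2 i j) = lmul p.1 (Kmat O t1 t2 p.2.1 p.2.2) := ⟨(g, i, j), h, rfl⟩
    obtain ⟨h1, h2⟩ := huniq _ _ _ _ _ _ h hex.choose_spec.1 hex.choose_spec.2
    change dite _ _ _ = _
    rw [dif_pos hex, ← h1, ← h2]
  have hempty : val ∅ = 0 := by
    refine dif_neg ?_
    rintro ⟨p, hp, h⟩
    exact (hcoset_ne p.1 _ _ hp).ne_empty h.symm
  refine ⟨huniq, val, hempty, hval, fun P P' href => ?_⟩
  refine mu0_eq_of_repr_eq val hempty ?_ ?_ P P' href.1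
  · rintro D E (rfl | ⟨g, i, j, h, rfl⟩) (rfl | ⟨g', i', j', h', rfl⟩)
    · simp
    · simp
    · simp
    · rw [← hKmat i j h, ← hKmat i' j' h']
      rcases rlex_total (i, j) (i', j') with hle | hle
      · rcases lmul_nested g' g (hK.anti _ _ _ _ h hle) with hh | hh
        · exact Or.inl hh.symm
        · exact Or.inr (Or.inr hh)
      · rcases lmul_nested g g' (hK.anti _ _ _ _ h' hle) with hh | hh
        · exact Or.inl hh
        · exact Or.inr (Or.inl hh)
  · rintro D hD hDne T hT hTdisj hDT
    obtain ⟨g₀, i₀, j₀, h₀, rfl⟩ := hD.resolve_left hDne.ne_empty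
    have hT' : ∀ E : Set (GL (Fin 2) F), ∃ (g : GL (Fin 2) F) (i j : ℤ), E ∈ T →
        RLt (0, 0) (i, j) ∧ E = lmul g (Kmat O t1 t2 i j) := by
      intro E
      by_cases hE : E ∈ T
      · obtain ⟨g, i, j, h⟩ := (hT E hE).1.resolve_left (hT E hE).2.ne_empty
        exact ⟨g, i, j, fun _ => h⟩
      · exact ⟨1, 0, 0, fun h => absurd h hE⟩
    choose g i j hgij using hT'
    have hE : ∀ E ∈ T, lmul (g E) (K (i E) (j E) : Set (GL (Fin 2) F)) = E := by
      intro E hE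
      rw [hKmat _ _ (hgij E hE).1]
      exact (hgij E hE).2.symm
    rw [hval g₀ i₀ j₀ h₀, hK.wt_partition lam T g₀ i₀ j₀ h₀ g i j (fun E hE => (hgij E hE).1)]
    · refine Finset.sum_congr rfl fun E hE => ?_
      conv_rhs => rw [(hgij E hE).2]
      exact (hval _ _ _ (hgij E hE).1).symm
    · intro E h1 E' h2 hne
      change Disjoint (lmul (g E) _) (lmul (g E') _)
      rw [hE E h1, hE E' h2]
      exact hTdisj E h1 E' h2 hne
    · rw [hKmat i₀ j₀ h₀, hDT, Set.sUnion_eq_biUnion]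
      exact Set.iUnion₂_congr fun E h => (hE E h).symm
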